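/- Let F be a non-normalizable term whose unique free variable is x, with x ∈ βΩ(F), and A a closed term with F[x:=A] ≄ F[x:=Ω]. Let (F_k) be a cofinal recursive reduction sequence of F, fix a good infinite branch of the associated tree, let x_(k) be the occurrence of x in F_k chosen by the branch and U_k = Arg(x_(k), F_k). If there is an integer l bounding the lengths of all the sequences U_k, then, setting A' = λx₁…λx_l λz.(z ν) for a fresh variable ν, ν occurs in every term t₁ such that F[x:=A'] ▷_{βΩ}* t₁ (i.e. ν ∈ βΩ(F[x:=A'])). -/

import Mathlib

/-! ## A de Bruijn presentation of the untyped λ-calculus -/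

/-- Untyped λ-terms in de Bruijn representation. -/
inductive Lam : Type where
  | var : ℕ → Lam
  | app : Lam → Lam → Lam
  | abs : Lam → Lam
  deriving DecidableEq

namespace Lam

/-- Lifting of de Bruijn indices (cutoff `d`). -/
def lift (d : ℕ) : Lam → Lam
  | var n => if n < d then var n else var (n + 1)
  | app a b => app (lift d a) (lift d b)
  | abs a => abs (lift (d + 1) a)

/-- Capture-avoiding substitution of `u` for the free variable `k`. -/
def subst : Lam → ℕ → Lam → Lam
  | var n, k, u => if n = k then u else if k < n then var (n - 1) else var n
  | app a b, k, u => app (subst a k u) (subst b k u)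
  | abs a, k, u => abs (subst a (k + 1) (lift 0 u))

/-- One-step β-reduction `▷`. -/
inductive Step : Lam → Lam → Prop
  | beta (a b : Lam) : Step (app (abs a) b) (subst a 0 b)
  | appL {a a' : Lam} (b : Lam) : Step a a' → Step (app a b) (app a' b)
  | appR (a : Lam) {b b' : Lam} : Step b b' → Step (app a b) (app a b')
  | abs {a a' : Lam} : Step a a' → Step (Lam.abs a) (Lam.abs a')

/-- β-reduction `▷*` : reflexive and transitive closure of `▷`. -/
def Steps : Lam → Lam → Prop := Relation.ReflTransGen Step

/-- β-normal term. -/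
def Normal (t : Lam) : Prop := ∀ t', ¬ Step t t'

/-- `Free x t` : the variable `x` (de Bruijn index, seen from the root) occurs free in `t`. -/
def Free : ℕ → Lam → Prop
  | x, var n => x = n
  | x, app a b => Free x a ∨ Free x b
  | x, abs a => Free (x + 1) a

/-- Closed term. -/
def Closed (t : Lam) : Prop := ∀ x, ¬ Free x t

/-- A variable applied to a (possibly empty) list of arguments. -/
inductive HeadVarApp : Lam → Prop
  | var (n : ℕ) : HeadVarApp (var n)
  | app {a : Lam} (b : Lam) : HeadVarApp a → HeadVarApp (app a b)

/-- Head normal forms `λx₁…λxₙ.(y t₁ … tₘ)`. -/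
inductive IsHNF : Lam → Prop
  | head {t : Lam} : HeadVarApp t → IsHNF t
  | abs {a : Lam} : IsHNF a → IsHNF (Lam.abs a)

/-- A term is solvable if it β-reduces to a head normal form. -/
def Solvable (t : Lam) : Prop := ∃ h, Steps t h ∧ IsHNF h

/-- `Ω = (λx.(x x))(λx.(x x))`. -/
def Omega : Lam := app (abs (app (var 0) (var 0))) (abs (app (var 0) (var 0)))

/-- Ω-reduction `▷_Ω` : replace an unsolvable subterm by `Ω`. -/
inductive OmegaStep : Lam → Lam → Prop
  | unsolv {t : Lam} : ¬ Solvable t → OmegaStep t Omega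
  | appL {a a' : Lam} (b : Lam) : OmegaStep a a' → OmegaStep (app a b) (app a' b)
  | appR (a : Lam) {b b' : Lam} : OmegaStep b b' → OmegaStep (app a b) (app a b')
  | abs {a a' : Lam} : OmegaStep a a' → OmegaStep (Lam.abs a) (Lam.abs a')

/-- `▷_Ω*`. -/
def OmegaSteps : Lam → Lam → Prop := Relation.ReflTransGen OmegaStep

/-- `▷_{βΩ}` : union of `▷` and `▷_Ω`. -/
def BOStep (t t' : Lam) : Prop := Step t t' ∨ OmegaStep t t'

/-- `▷_{βΩ}*`. -/
def BOSteps : Lam → Lam → Prop := Relation.ReflTransGen BOStep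

/-- `u ≃ v` : equality in the λ-theory H (common `▷_{βΩ}*`-reduct). -/
def SimH (u v : Lam) : Prop := ∃ w, BOSteps u w ∧ BOSteps v w

/-- Simultaneous (parallel) substitution along `σ`. -/
def psubst (σ : ℕ → Lam) : Lam → Lam
  | var n => σ n
  | app a b => app (psubst σ a) (psubst σ b)
  | abs a => abs (psubst (fun n => match n with | 0 => var 0 | m + 1 => lift 0 (σ m)) a)

/-- `(x V)` : the application of a head `h` to a list of arguments. -/
def mkApps (h : Lam) (as : List Lam) : Lam := as.foldl app h

/-- `U ⊑ V` : some initial segment of `V` is obtained from `U` by a substitution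
followed by componentwise β-reductions. -/
def Sqsubseteq (U V : List Lam) : Prop :=
  ∃ (σ : ℕ → Lam) (W : List Lam), W <+: V ∧
    List.Forall₂ (fun u w => Steps (psubst σ u) w) U W

/-! ### Occurrences as positions -/

/-- Directions inside a term. -/
inductive Dir : Type where
  | left | right | down
  deriving DecidableEq

/-- Positions (occurrences) in a term. -/
abbrev Pos := List Dir

/-- The subterm of `t` at position `p` (if any). -/
def subtermAt : Lam → Pos → Option Lam
  | t, [] => some t
  | app a _, Dir.left :: p => subtermAt a p
  | app _ b, Dir.right :: p => subtermAt b p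
  | abs a, Dir.down :: p => subtermAt a p
  | _, _ :: _ => none

/-- Replace the subterm of `t` at position `p` by `s` (if the position exists). -/
def replaceAt : Lam → Pos → Lam → Option Lam
  | _, [], s => some s
  | app a b, Dir.left :: p, s => (replaceAt a p s).map (fun a' => app a' b)
  | app a b, Dir.right :: p, s => (replaceAt b p s).map (fun b' => app a b')
  | abs a, Dir.down :: p, s => (replaceAt a p s).map Lam.abs
  | _, _ :: _, _ => none

/-- `OccOf x t p` : position `p` is an occurrence in `t` of the free variable `x`
(index seen from the root, hence shifted by the number of binders crossed). -/
def OccOf (x : ℕ) (t : Lam) (p : Pos) : Prop :=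
  subtermAt t p = some (var (x + p.count Dir.down))

/-- `ArgOf t p V` : `V` is the maximal list of arguments, in `t`, of the occurrence
sitting at position `p`; i.e. `([] V)` is the applicative context of that occurrence. -/
def ArgOf (t : Lam) (p : Pos) (V : List Lam) : Prop :=
  ∃ (q : Pos) (h : Lam),
    p = q ++ List.replicate V.length Dir.left ∧
    (∀ q' : Pos, q ≠ q' ++ [Dir.left]) ∧
    subtermAt t q = some (mkApps h V) ∧ subtermAt t p = some h

/-- `InArgOfOcc x t p q` : `q` is an occurrence of `x` in `t` and the position `p` lies
inside one of the elements of `Arg(x_[q], t)`. -/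
def InArgOfOcc (x : ℕ) (t : Lam) (p q : Pos) : Prop :=
  OccOf x t q ∧ ∃ (r : Pos) (n : ℕ),
    q = r ++ List.replicate n Dir.left ∧
    (∀ r' : Pos, r ≠ r' ++ [Dir.left]) ∧
    ∃ (j : ℕ) (s : Pos), j < n ∧ p = r ++ List.replicate j Dir.left ++ Dir.right :: s

/-- The occurrence `p` of `x` is pure in `t` : no other occurrence `q` of `x` in `t`
is such that `p` occurs in one of the elements of `Arg(x_[q], t)`. -/
def PureOcc (x : ℕ) (t : Lam) (p : Pos) : Prop :=
  OccOf x t p ∧ ∀ q, q ≠ p → ¬ InArgOfOcc x t p q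

/-- Renaming of the free variable `y` into `x`. -/
def rename (y x : ℕ) : Lam → Lam
  | var n => if n = y then var x else var n
  | app a b => app (rename y x a) (rename y x b)
  | abs a => abs (rename (y + 1) (x + 1) a)

/-- `Residue x u v p p'` : along some β-reduction from `u` to `v`, the occurrence `p'` of
`x` in `v` is a residue (traced copy) of the occurrence `p` of `x` in `u`.  This is
expressed by marking the occurrence `p` of `x` with a fresh variable `y` and tracing the
occurrences of `y`. -/
def Residue (x : ℕ) (u v : Lam) (p p' : Pos) : Prop :=
  ∃ (y : ℕ) (u₀ v₀ : Lam),
    ¬ Free y u ∧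
    replaceAt u p (var (y + p.count Dir.down)) = some u₀ ∧
    Steps u₀ v₀ ∧ rename y x v₀ = v ∧ OccOf y v₀ p'

/-- The occurrence `p` of the free variable `0` ("x") in `G` is good with respect to the
closed term `A` : it is pure in `G` and `u[x:=A]` is solvable for every subterm `u` of
`G` in which this occurrence occurs. -/
def GoodOcc (A G : Lam) (p : Pos) : Prop :=
  PureOcc 0 G p ∧
    ∀ (q : Pos) (u : Lam), q <+: p → subtermAt G q = some u →
      Solvable (subst u (q.count Dir.down) A)

/-! ### Miscellaneous -/

/-- A fixed effective Gödel numbering of λ-terms. -/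
def code : Lam → ℕ
  | var n => Nat.pair 0 n
  | app a b => Nat.pair 1 (Nat.pair (code a) (code b))
  | abs a => Nat.pair 2 (code a)

/-- Body `f^k z` of the Church numeral. -/
def churchBody : ℕ → Lam
  | 0 => var 0
  | k + 1 => app (var 1) (churchBody k)

/-- The Church numeral `c_k = λf λz.(f^k z)`. -/
def church (k : ℕ) : Lam := abs (abs (churchBody k))

/-- `n`-fold abstraction `λx₁…λxₙ.t`. -/
def absN : ℕ → Lam → Lam
  | 0, t => t
  | n + 1, t => abs (absN n t)

/-- Number of symbols of a term. -/
def size : Lam → ℕ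
  | var _ => 1
  | app a b => size a + size b + 1
  | abs a => size a + 1

/-- Subterm relation. -/
inductive Subterm : Lam → Lam → Prop
  | refl (t : Lam) : Subterm t t
  | appL {s a : Lam} (b : Lam) : Subterm s a → Subterm s (app a b)
  | appR (a : Lam) {s b : Lam} : Subterm s b → Subterm s (app a b)
  | abs {s a : Lam} : Subterm s a → Subterm s (Lam.abs a)

/-- `t` contains no subterm of the form `(x u)` for the free variable `x`. -/
def NoVarApp : ℕ → Lam → Prop
  | _, var _ => True
  | x, app a b => a ≠ var x ∧ NoVarApp x a ∧ NoVarApp x b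
  | x, abs a => NoVarApp (x + 1) a

/-- Headed by the variable `d` : term of the form `(x V)` with `x = var d`. -/
inductive Headed : ℕ → Lam → Prop
  | var (d : ℕ) : Headed d (var d)
  | app {d : ℕ} {a : Lam} (b : Lam) : Headed d a → Headed d (app a b)

end Lam

namespace Lam

/-! ### De Bruijn bookkeeping -/

theorem lift_lift (t : Lam) : ∀ i j, i ≤ j → lift i (lift j t) = lift (j + 1) (lift i t) := by
  induction t with
  | var n => intro i j h; simp only [lift]; grind [lift]
  | app a b iha ihb => intro i j h; simp only [lift, iha i j h, ihb i j h]
  | abs a ih => intro i j h; simp only [lift, ih (i + 1) (j + 1) (by omega)]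

theorem lift_subst_le (t : Lam) : ∀ j k u, j ≤ k →
    lift j (subst t k u) = subst (lift j t) (k + 1) (lift j u) := by
  induction t with
  | var n => intro j k u h; simp only [lift, subst]; grind [lift, subst]
  | app a b iha ihb => intro j k u h; simp only [lift, subst, iha j k u h, ihb j k u h]
  | abs a ih =>
    intro j k u h
    simp only [lift, subst, ih (j + 1) (k + 1) _ (by omega), lift_lift u 0 j (by omega)]

theorem lift_subst_ge (t : Lam) : ∀ j k u, k ≤ j →
    lift j (subst t k u) = subst (lift (j + 1) t) k (lift j u) := by
  induction t with
  | var n => intro j k u h; simp only [lift, subst]; grind [lift, subst]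
  | app a b iha ihb => intro j k u h; simp only [lift, subst, iha j k u h, ihb j k u h]
  | abs a ih =>
    intro j k u h
    simp only [lift, subst, ih (j + 1) (k + 1) _ (by omega), lift_lift u 0 j (by omega)]

theorem subst_lift (t : Lam) : ∀ k u, subst (lift k t) k u = t := by
  induction t with
  | var n => intro k u; simp only [lift]; grind [subst]
  | app a b iha ihb => intro k u; simp only [lift, subst, iha, ihb]
  | abs a ih => intro k u; simp only [lift, subst, ih]

theorem subst_subst (t : Lam) : ∀ i j u v, i ≤ j →
    subst (subst t i u) j v = subst (subst t (j + 1) (lift i v)) i (subst u j v) := by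
  induction t with
  | var n =>
    intro i j u v h
    simp only [subst]
    by_cases h1 : n = i
    · grind [subst]
    · by_cases h2 : n = j + 1
      · subst h2
        have : i < j + 1 := by omega
        simp [h1, this, subst, subst_lift]
      · grind [subst]
  | app a b iha ihb => intro i j u v h; simp only [subst, iha i j u v h, ihb i j u v h]
  | abs a ih =>
    intro i j u v h
    simp only [subst, ih (i + 1) (j + 1) _ _ (by omega : i + 1 ≤ j + 1),
      lift_lift v 0 i (by omega), lift_subst_le u 0 j v (by omega)]

/-! ### Congruence of `Steps` -/

theorem Steps.appL {a a' : Lam} (b : Lam) (h : Steps a a') : Steps (app a b) (app a' b) :=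
  Relation.ReflTransGen.lift (fun t => app t b) (fun _ _ s => Step.appL b s) _ _ h

theorem Steps.appR (a : Lam) {b b' : Lam} (h : Steps b b') : Steps (app a b) (app a b') :=
  Relation.ReflTransGen.lift (fun t => app a t) (fun _ _ s => Step.appR a s) _ _ h

theorem Steps.app {a a' b b' : Lam} (h : Steps a a') (h' : Steps b b') :
    Steps (Lam.app a b) (Lam.app a' b') :=
  Relation.ReflTransGen.trans (Steps.appL b h) (Steps.appR a' h')

theorem Steps.abs {a a' : Lam} (h : Steps a a') : Steps (Lam.abs a) (Lam.abs a') :=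
  Relation.ReflTransGen.lift (fun t => Lam.abs t) (fun _ _ s => Step.abs s) _ _ h

theorem Steps.rfl' (a : Lam) : Steps a a := Relation.ReflTransGen.refl

theorem Steps.one {a b : Lam} (h : Step a b) : Steps a b := Relation.ReflTransGen.single h

/-! ### Weak head reduction and standard reduction -/

/-- Weak head reduction. -/
inductive W : Lam → Lam → Prop
  | beta (a b : Lam) : W (app (abs a) b) (subst a 0 b)
  | appL {a c : Lam} (b : Lam) : W a c → W (app a b) (app c b)

/-- Iterated weak head reduction. -/
def Ws : Lam → Lam → Prop := Relation.ReflTransGen W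

theorem W.step {a b : Lam} (h : W a b) : Step a b := by
  induction h with
  | beta a b => exact Step.beta a b
  | appL b _ ih => exact Step.appL b ih

theorem W.det {a b c : Lam} (h : W a b) (h' : W a c) : b = c := by
  induction h generalizing c with
  | beta a b =>
    cases h' with
    | beta => rfl
    | appL _ h => cases h
  | appL b h ih =>
    cases h' with
    | beta => cases h
    | appL _ h' => rw [ih h']

theorem W.lift {a b : Lam} (h : W a b) (j : ℕ) : W (lift j a) (lift j b) := by
  induction h with
  | beta a b =>
    rw [lift_subst_ge a j 0 b (by omega)]
    exact W.beta _ _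
  | appL b _ ih => exact W.appL _ ih

theorem W.subst {a b : Lam} (h : W a b) (k : ℕ) (u : Lam) : W (subst a k u) (subst b k u) := by
  induction h with
  | beta a b =>
    rw [subst_subst a 0 k b u (by omega)]
    exact W.beta _ _
  | appL b _ ih => exact W.appL _ ih

theorem Ws.appL {a a' : Lam} (b : Lam) (h : Ws a a') : Ws (app a b) (app a' b) :=
  Relation.ReflTransGen.lift (fun t => app t b) (fun _ _ s => W.appL b s) _ _ h

theorem Ws.lift {a b : Lam} (h : Ws a b) (j : ℕ) : Ws (lift j a) (lift j b) :=
  Relation.ReflTransGen.lift (fun t => Lam.lift j t) (fun _ _ s => W.lift s j) _ _ h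

theorem Ws.subst {a b : Lam} (h : Ws a b) (k : ℕ) (u : Lam) :
    Ws (subst a k u) (subst b k u) :=
  Relation.ReflTransGen.lift (fun t => Lam.subst t k u) (fun _ _ s => W.subst s k u) _ _ h

/-- Standard reduction (Kashima). -/
inductive St : Lam → Lam → Prop
  | var {t : Lam} (n : ℕ) : Ws t (var n) → St t (var n)
  | app {t a b a' b' : Lam} : Ws t (app a b) → St a a' → St b b' → St t (app a' b')
  | abs {t a a' : Lam} : Ws t (abs a) → St a a' → St t (abs a')

theorem St.refl (t : Lam) : St t t := by
  induction t with
  | var n => exact St.var n Relation.ReflTransGen.refl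
  | app a b iha ihb => exact St.app Relation.ReflTransGen.refl iha ihb
  | abs a ih => exact St.abs Relation.ReflTransGen.refl ih

theorem St.expand {t u v : Lam} (h : Ws t u) (h' : St u v) : St t v := by
  cases h' with
  | var n h1 => exact St.var n (h.trans h1)
  | app h1 h2 h3 => exact St.app (h.trans h1) h2 h3
  | abs h1 h2 => exact St.abs (h.trans h1) h2

theorem St.lift {t u : Lam} (h : St t u) : ∀ j, St (lift j t) (lift j u) := by
  induction h with
  | var n h => intro j; exact St.expand (h.lift j) (St.refl _)
  | app h _ _ ih1 ih2 => intro j; exact St.app (h.lift j) (ih1 j) (ih2 j)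
  | abs h _ ih => intro j; exact St.abs (h.lift j) (ih (j + 1))

theorem St.subst {a a' : Lam} (h : St a a') : ∀ {b b'} k, St b b' →
    St (subst a k b) (subst a' k b') := by
  induction h with
  | var n h =>
    intro b b' k hb
    refine St.expand (h.subst k b) ?_
    simp only [Lam.subst]
    split_ifs
    · exact hb
    · exact St.refl _
    · exact St.refl _
  | app h _ _ ih1 ih2 => intro b b' k hb; exact St.app (h.subst k b) (ih1 k hb) (ih2 k hb)
  | abs h _ ih => intro b b' k hb; exact St.abs (h.subst k b) (ih (k + 1) (hb.lift 0))

theorem St.step {u v : Lam} (h : Step u v) : ∀ {t}, St t u → St t v := by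
  induction h with
  | beta a b =>
    intro t ht
    cases ht with
    | app h1 h2 h3 =>
      cases h2 with
      | abs h4 h5 =>
        refine St.expand (h1.trans ((Ws.appL _ h4).trans
          (Relation.ReflTransGen.single (W.beta _ _)))) ?_
        exact h5.subst 0 h3
  | appL b _ ih =>
    intro t ht
    cases ht with
    | app h1 h2 h3 => exact St.app h1 (ih h2) h3
  | appR a _ ih =>
    intro t ht
    cases ht with
    | app h1 h2 h3 => exact St.app h1 h2 (ih h3)
  | abs _ ih =>
    intro t ht
    cases ht with
    | abs h1 h2 => exact St.abs h1 (ih h2)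

theorem Steps.st {t u : Lam} (h : Steps t u) : St t u := by
  induction h with
  | refl => exact St.refl _
  | tail _ h ih => exact St.step h ih

/-! ### Head normalisation with a bound on the arguments of a distinguished variable -/

/-- `Hd z n t` : `t` is the variable `z` applied to `n` arguments. -/
inductive Hd (z : ℕ) : ℕ → Lam → Prop
  | var : Hd z 0 (var z)
  | app {n : ℕ} {a : Lam} (b : Lam) : Hd z n a → Hd z (n + 1) (app a b)

theorem Hd.unique {z n z' n' : ℕ} {t : Lam} (h : Hd z n t) (h' : Hd z' n' t) :
    z = z' ∧ n = n' := by
  induction h generalizing n' with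
  | var => cases h'; exact ⟨rfl, rfl⟩
  | app b _ ih =>
    cases h' with
    | app _ h' => have := ih h'; exact ⟨this.1, by omega⟩

theorem Hd.not_W {z n : ℕ} {t t' : Lam} (h : Hd z n t) : ¬ W t t' := by
  induction h generalizing t' with
  | var => intro h; cases h
  | app b h ih =>
    intro h'
    cases h' with
    | beta => cases h
    | appL _ h' => exact ih h'

theorem Hd.step {z n : ℕ} {t t' : Lam} (h : Hd z n t) (hs : Step t t') : Hd z n t' := by
  induction h generalizing t' with
  | var => cases hs
  | app b h ih =>
    cases hs with
    | beta => cases h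
    | appL _ h' => exact Hd.app _ (ih h')
    | appR _ h' => exact Hd.app _ h

theorem Hd.subst {z n : ℕ} {t : Lam} (h : Hd z n t) (k : ℕ) (u : Lam) (hk : k < z) :
    Hd (z - 1) n (subst t k u) := by
  induction h with
  | var =>
    have : z ≠ k := by omega
    simp only [Lam.subst, this, hk, if_true, if_false]
    exact Hd.var
  | app b h ih => exact Hd.app _ ih

theorem Hd.lift {z n : ℕ} {t : Lam} (h : Hd z n t) (j : ℕ) (hk : j ≤ z) :
    Hd (z + 1) n (lift j t) := by
  induction h with
  | var =>
    have : ¬ z < j := by omega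
    simp only [Lam.lift, this, if_false]
    exact Hd.var
  | app b h ih => exact Hd.app _ ih

/-- Every term is a head variable application, an abstraction, or weak head reduces. -/
theorem trichotomy (t : Lam) : (∃ z n, Hd z n t) ∨ (∃ a, t = abs a) ∨ ∃ t', W t t' := by
  induction t with
  | var n => exact Or.inl ⟨n, 0, Hd.var⟩
  | abs a => exact Or.inr (Or.inl ⟨a, rfl⟩)
  | app a b iha =>
    rcases iha with ⟨z, n, h⟩ | ⟨c, rfl⟩ | ⟨t', h⟩
    · exact Or.inl ⟨z, n + 1, Hd.app b h⟩
    · exact Or.inr (Or.inr ⟨_, W.beta _ _⟩)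
    · exact Or.inr (Or.inr ⟨_, W.appL _ h⟩)

/-- `t` head normalises, to a term in which the variable `d`, if it is the head, has a
number of arguments satisfying `B`. -/
inductive HN (B : ℕ → Prop) : ℕ → Lam → Prop
  | head {d z n : ℕ} {t : Lam} : Hd z n t → (z = d → B n) → HN B d t
  | abs {d : ℕ} {a : Lam} : HN B (d + 1) a → HN B d (Lam.abs a)
  | step {d : ℕ} {t t' : Lam} : W t t' → HN B d t' → HN B d t

theorem HN.head_inv {B : ℕ → Prop} {d n : ℕ} {t : Lam} (h : HN B d t) (h' : Hd d n t) : B n := by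
  cases h with
  | head h1 h2 =>
    obtain ⟨rfl, rfl⟩ := h1.unique h'
    exact h2 rfl
  | abs => cases h'
  | step h => exact absurd h h'.not_W

theorem HN.abs_inv {B : ℕ → Prop} {d : ℕ} {a : Lam} (h : HN B d (Lam.abs a)) :
    HN B (d + 1) a := by
  cases h with
  | head h1 h2 => cases h1
  | abs h => exact h
  | step h => cases h

theorem HN.st {B : ℕ → Prop} {d : ℕ} {u : Lam} (h : HN B d u) : ∀ {t}, St t u → HN B d t := by
  have key : ∀ {t u}, Ws t u → ∀ {d}, HN B d u → HN B d t := by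
    intro t u h
    induction h using Relation.ReflTransGen.head_induction_on with
    | refl => intro d h; exact h
    | head h _ ih => intro d h'; exact HN.step h (ih h')
  have hd : ∀ {z n u}, Hd z n u → ∀ {t}, St t u → ∃ t', Ws t t' ∧ Hd z n t' := by
    intro z n u h
    induction h with
    | var =>
      intro t ht
      cases ht with
      | var _ h => exact ⟨_, h, Hd.var⟩
    | app b _ ih =>
      intro t ht
      cases ht with
      | app h1 h2 h3 =>
        obtain ⟨a', h4, h5⟩ := ih h2
        exact ⟨_, h1.trans (Ws.appL _ h4), Hd.app _ h5⟩
  induction h with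
  | head h1 h2 =>
    intro t ht
    obtain ⟨t', h3, h4⟩ := hd h1 ht
    exact key h3 (HN.head h4 h2)
  | abs _ ih =>
    intro t ht
    cases ht with
    | abs h1 h2 => exact key h1 (HN.abs (ih h2))
  | step h _ ih => intro t ht; exact ih (St.step h.step ht)

theorem HN.steps {B : ℕ → Prop} {d : ℕ} {t u : Lam} (h : HN B d u) (hs : Steps t u) :
    HN B d t := h.st hs.st

theorem HN.of_subst {B : ℕ → Prop} {d : ℕ} {v : Lam} (h : HN B d v) :
    ∀ {s k u}, k ≤ d → v = Lam.subst s k u → HN B (d + 1) s := by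
  induction h with
  | @head d z n t h1 h2 =>
    intro s k u hk hv
    rcases trichotomy s with ⟨z', n', h⟩ | ⟨a, rfl⟩ | ⟨t', h⟩
    · refine HN.head h ?_
      rintro rfl
      have h3 := h.subst k u (by omega)
      rw [← hv] at h3
      obtain ⟨h4, rfl⟩ := h1.unique h3
      exact h2 (by omega)
    · subst hv; cases h1
    · exact absurd (hv ▸ h.subst k u) h1.not_W
  | @abs d a h ih =>
    intro s k u hk hv
    rcases trichotomy s with ⟨z', n', h⟩ | ⟨a, rfl⟩ | ⟨t', h⟩
    · refine HN.head h ?_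
      rintro rfl
      have h3 := h.subst k u (by omega)
      rw [← hv] at h3
      cases h3
    · simp only [Lam.subst, Lam.abs.injEq] at hv
      exact HN.abs (ih (by omega) hv)
    · have := h.subst k u
      rw [← hv] at this
      cases this
  | @step d t t1 h h' ih =>
    intro s k u hk hv
    rcases trichotomy s with ⟨z', n', h3⟩ | ⟨a, rfl⟩ | ⟨t', h3⟩
    · refine HN.head h3 ?_
      rintro rfl
      have h4 := h3.subst k u (by omega)
      rw [← hv] at h4
      exact absurd h h4.not_W
    · subst hv; cases h
    · have := h3.subst k u
      rw [← hv] at this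
      exact HN.step h3 (ih hk (h.det this))

theorem HN.of_lift {B : ℕ → Prop} {d : ℕ} {v : Lam} (h : HN B d v) :
    ∀ {s j e}, d = e + 1 → j ≤ e → v = Lam.lift j s → HN B e s := by
  induction h with
  | @head d z n t h1 h2 =>
    intro s j e hd hk hv
    rcases trichotomy s with ⟨z', n', h⟩ | ⟨a, rfl⟩ | ⟨t', h⟩
    · refine HN.head h ?_
      rintro rfl
      have h3 := h.lift j (by omega)
      rw [← hv] at h3
      obtain ⟨h4, rfl⟩ := h1.unique h3
      exact h2 (by omega)
    · subst hv; cases h1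
    · exact absurd (hv ▸ h.lift j) h1.not_W
  | @abs d a h ih =>
    intro s j e hd hk hv
    rcases trichotomy s with ⟨z', n', h⟩ | ⟨a, rfl⟩ | ⟨t', h⟩
    · refine HN.head h ?_
      rintro rfl
      have h3 := h.lift j (by omega)
      rw [← hv] at h3
      cases h3
    · simp only [Lam.lift, Lam.abs.injEq] at hv
      exact HN.abs (ih (by omega) (by omega) hv)
    · have := h.lift j
      rw [← hv] at this
      cases this
  | @step d t t1 h h' ih =>
    intro s j e hd hk hv
    rcases trichotomy s with ⟨z', n', h3⟩ | ⟨a, rfl⟩ | ⟨t', h3⟩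
    · refine HN.head h3 ?_
      rintro rfl
      have h4 := h3.lift j (by omega)
      rw [← hv] at h4
      exact absurd h h4.not_W
    · subst hv; cases h
    · have := h3.lift j
      rw [← hv] at this
      exact HN.step h3 (ih hd hk (h.det this))

theorem HN.of_app {B : ℕ → Prop} (hB : ∀ n, B (n + 1) → B n) {d : ℕ} {v : Lam} (h : HN B d v) :
    ∀ {s b}, v = Lam.app s b → HN B d s := by
  induction h with
  | @head d z n t h1 h2 =>
    intro s b hv
    subst hv
    cases h1 with
    | app _ h1 => exact HN.head h1 (fun h => hB _ (h2 h))
  | @abs d a h ih => intro s b hv; cases hv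
  | @step d t t1 h h' ih =>
    intro s b hv
    subst hv
    cases h with
    | beta => exact HN.abs (HN.of_subst h' (Nat.zero_le _) rfl)
    | appL _ h => exact HN.step h (ih rfl)

theorem HeadVarApp.hd {t : Lam} (h : HeadVarApp t) : ∃ z n, Hd z n t := by
  induction h with
  | var n => exact ⟨n, 0, Hd.var⟩
  | app b _ ih => obtain ⟨z, n, h⟩ := ih; exact ⟨z, n + 1, Hd.app b h⟩

theorem Hd.headVarApp {z n : ℕ} {t : Lam} (h : Hd z n t) : HeadVarApp t := by
  induction h with
  | var => exact HeadVarApp.var _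
  | app b _ ih => exact HeadVarApp.app b ih

/-- No restriction on the number of arguments. -/
def Top : ℕ → Prop := fun _ => True

theorem solvable_iff {t : Lam} (d : ℕ) : Solvable t ↔ HN Top d t := by
  constructor
  · rintro ⟨h, hs, hh⟩
    refine HN.steps ?_ hs
    clear hs
    induction hh generalizing d with
    | head h => obtain ⟨z, n, h⟩ := h.hd; exact HN.head h (fun _ => trivial)
    | abs _ ih => exact HN.abs (ih _)
  · intro h
    induction h with
    | head h _ => exact ⟨_, Steps.rfl' _, IsHNF.head h.headVarApp⟩
    | abs _ ih => obtain ⟨h, h1, h2⟩ := ih; exact ⟨_, Steps.abs h1, IsHNF.abs h2⟩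
    | step h _ ih =>
      obtain ⟨h', h1, h2⟩ := ih
      exact ⟨h', (Steps.one h.step).trans h1, h2⟩

theorem Solvable.of_steps {t u : Lam} (h : Steps t u) (hu : Solvable u) : Solvable t := by
  obtain ⟨v, h1, h2⟩ := hu
  exact ⟨v, h.trans h1, h2⟩

theorem Solvable.of_subst {s : Lam} {k : ℕ} {u : Lam} (h : Solvable (subst s k u)) :
    Solvable s :=
  (solvable_iff (k + 1)).2 (HN.of_subst ((solvable_iff k).1 h) le_rfl rfl)

theorem Solvable.of_lift {s : Lam} {k : ℕ} (h : Solvable (lift k s)) : Solvable s :=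
  (solvable_iff k).2 (HN.of_lift ((solvable_iff (k + 1)).1 h) rfl le_rfl rfl)

/-! ### The term `λx₁…λx_m λz.(z y)` -/

/-- `T m y = λx₁…λx_m λz.(z y)`. -/
def T : ℕ → ℕ → Lam
  | 0, y => abs (app (var 0) (var (y + 1)))
  | m + 1, y => abs (T m (y + 1))

theorem T_eq (m : ℕ) : ∀ y, T m y = absN m (abs (app (var 0) (var (y + m + 1)))) := by
  induction m with
  | zero => intro y; rfl
  | succ m ih =>
    intro y
    simp only [T, absN, ih]
    rw [show y + 1 + m + 1 = y + (m + 1) + 1 by omega]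

theorem T_lift (m : ℕ) : ∀ y j, j ≤ y → lift j (T m y) = T m (y + 1) := by
  induction m with
  | zero => intro y j h; simp [T, lift]; omega
  | succ m ih => intro y j h; simp only [T, lift, ih (y + 1) (j + 1) (by omega)]

theorem T_subst (m : ℕ) : ∀ y k u, k ≤ y → subst (T m (y + 1)) k u = T m y := by
  induction m with
  | zero =>
    intro y k u h
    have h1 : y + 1 + 1 ≠ k + 1 := by omega
    have h2 : k + 1 < y + 1 + 1 := by omega
    simp only [T, subst, h1, h2, if_true, if_false]
    simp
  | succ m ih => intro y k u h; simp only [T, subst, ih (y + 1) (k + 1) _ (by omega)]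

theorem T_normal (m : ℕ) : ∀ y t, ¬ Step (T m y) t := by
  induction m with
  | zero =>
    intro y t h
    cases h with
    | abs h =>
      cases h with
      | appL _ h => cases h
      | appR _ h => cases h
  | succ m ih =>
    intro y t h
    cases h with
    | abs h => exact ih _ _ h

theorem T_hnf (m : ℕ) : ∀ y, IsHNF (T m y) := by
  induction m with
  | zero => intro y; exact IsHNF.abs (IsHNF.head (HeadVarApp.app _ (HeadVarApp.var _)))
  | succ m ih => intro y; exact IsHNF.abs (ih _)

theorem IsHNF.solvable {t : Lam} (h : IsHNF t) : Solvable t := ⟨t, Steps.rfl' t, h⟩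

theorem not_omegaStep_var (n : ℕ) (t : Lam) : ¬ OmegaStep (var n) t := by
  intro h
  cases h with
  | unsolv h => exact h (IsHNF.head (HeadVarApp.var n)).solvable

theorem T_not_omegaStep (m : ℕ) : ∀ y t, ¬ OmegaStep (T m y) t := by
  induction m with
  | zero =>
    intro y t h
    cases h with
    | unsolv h => exact h (T_hnf 0 y).solvable
    | abs h =>
      cases h with
      | unsolv h => exact h (IsHNF.head (HeadVarApp.app _ (HeadVarApp.var _))).solvable
      | appL _ h => exact not_omegaStep_var _ _ h
      | appR _ h => exact not_omegaStep_var _ _ h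
  | succ m ih =>
    intro y t h
    cases h with
    | unsolv h => exact h (T_hnf (m + 1) y).solvable
    | abs h => exact ih _ _ h

theorem T_free (m : ℕ) : ∀ y, Free y (T m y) := by
  induction m with
  | zero => intro y; exact Or.inr rfl
  | succ m ih => intro y; exact ih (y + 1)

/-! ### The matching relation -/

/-- `R l ν d G M` : `M` is a partial reduct of `G[x:=A']` (`x` of index `d`), where the
subterms of `G` that do not head normalise to a term in which the head variable is
different from `x` or has at most `l` arguments may be matched with anything. -/
inductive R (l ν : ℕ) : ℕ → Lam → Lam → Prop
  | var {d y : ℕ} : y < d → R l ν d (var y) (var y)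
  | app {d : ℕ} {a b a' b' : Lam} : R l ν d a a' → R l ν d b b' → R l ν d (app a b) (app a' b')
  | abs {d : ℕ} {a a' : Lam} : R l ν (d + 1) a a' → R l ν d (abs a) (abs a')
  | xs {d n m : ℕ} {G : Lam} : Hd d n G → n + m = l → R l ν d G (T m (ν + d))
  | dead {d : ℕ} {G M : Lam} : ¬ HN (· ≤ l) d G → R l ν d G M

theorem HN.of_app_le {l d : ℕ} {s b : Lam} (h : HN (· ≤ l) d (Lam.app s b)) :
    HN (· ≤ l) d s :=
  HN.of_app (B := (· ≤ l)) (fun n hn => Nat.le_of_succ_le hn) h rfl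

theorem R.lift {l ν d : ℕ} {G M : Lam} (h : R l ν d G M) :
    ∀ j, j ≤ d → R l ν (d + 1) (lift j G) (lift j M) := by
  induction h with
  | var h =>
    intro j hj
    simp only [Lam.lift]
    split_ifs
    · exact R.var (by omega)
    · exact R.var (by omega)
  | app _ _ ih1 ih2 => intro j hj; exact R.app (ih1 j hj) (ih2 j hj)
  | abs _ ih => intro j hj; exact R.abs (ih (j + 1) (by omega))
  | xs h1 h2 =>
    intro j hj
    rw [T_lift _ _ _ (by omega)]
    exact R.xs (h1.lift j hj) h2
  | dead h =>
    intro j hj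
    exact R.dead (fun h' => h (HN.of_lift h' rfl hj rfl))

theorem R.subst {l ν e : ℕ} {a m : Lam} (h : R l ν e a m) :
    ∀ {d b c k}, e = d + 1 → k ≤ d → R l ν d b c →
      R l ν d (subst a k b) (subst m k c) := by
  induction h with
  | var h =>
    intro d b c k he hk hb
    simp only [Lam.subst]
    split_ifs
    · exact hb
    · exact R.var (by omega)
    · exact R.var (by omega)
  | app _ _ ih1 ih2 => intro d b c k he hk hb; exact R.app (ih1 he hk hb) (ih2 he hk hb)
  | abs _ ih =>
    intro d b c k he hk hb
    exact R.abs (ih (by omega) (by omega) (hb.lift 0 (by omega)))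
  | xs h1 h2 =>
    intro d b c k he hk hb
    subst he
    rw [← add_assoc, T_subst _ _ _ _ (by omega)]
    exact R.xs (h1.subst k b (by omega)) h2
  | dead h =>
    intro d b c k he hk hb
    subst he
    exact R.dead (fun h' => h (HN.of_subst h' hk rfl))

theorem R.start (l ν : ℕ) (t : Lam) : ∀ d, (∀ y, Free y t → y ≤ d) →
    R l ν d t (Lam.subst t d (T l (ν + d))) := by
  induction t with
  | var n =>
    intro d h
    have hn : n ≤ d := h n rfl
    simp only [Lam.subst]
    split_ifs with h1 h2
    · subst h1; exact R.xs (Hd.var) (by omega)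
    · omega
    · exact R.var (by omega)
  | app a b iha ihb =>
    intro d h
    exact R.app (iha d (fun y hy => h y (Or.inl hy))) (ihb d (fun y hy => h y (Or.inr hy)))
  | abs a ih =>
    intro d h
    simp only [Lam.subst]
    rw [T_lift _ _ _ (by omega)]
    refine R.abs (ih (d + 1) (fun y hy => ?_))
    cases y with
    | zero => omega
    | succ y => have := h y hy; omega

/-- Forward simulation. -/
theorem R.forward {l ν d : ℕ} {G M : Lam} (h : R l ν d G M) :
    ∀ {G'}, Step G G' → ∃ M', Steps M M' ∧ R l ν d G' M' := by
  induction h with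
  | var h => intro G' hs; cases hs
  | @app d a b a' b' h1 h2 ih1 ih2 =>
    intro G' hs
    cases hs with
    | beta a b =>
      cases h1 with
      | abs h1 => exact ⟨_, Steps.one (Step.beta _ _), h1.subst rfl (Nat.zero_le _) h2⟩
      | xs h1 _ => cases h1
      | dead h1 =>
        exact ⟨_, Steps.rfl' _, R.dead (fun h => h1 (HN.abs (HN.of_subst h (Nat.zero_le _) rfl)))⟩
    | appL _ hs => obtain ⟨m, h3, h4⟩ := ih1 hs; exact ⟨_, h3.appL _, R.app h4 h2⟩
    | appR _ hs => obtain ⟨m, h3, h4⟩ := ih2 hs; exact ⟨_, h3.appR _, R.app h1 h4⟩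
  | abs _ ih =>
    intro G' hs
    cases hs with
    | abs hs => obtain ⟨m, h3, h4⟩ := ih hs; exact ⟨_, h3.abs, R.abs h4⟩
  | xs h1 h2 => intro G' hs; exact ⟨_, Steps.rfl' _, R.xs (h1.step hs) h2⟩
  | dead h =>
    intro G' hs
    exact ⟨_, Steps.rfl' _, R.dead (fun h' => h (h'.steps (Steps.one hs)))⟩

theorem R.head {l ν d z n : ℕ} {G : Lam} (h : Hd z n G) : ∀ {M}, (z = d → n ≤ l) →
    R l ν d G M → ∃ M', Steps M M' ∧
      ((∃ m, z = d ∧ n + m = l ∧ M' = T m (ν + d)) ∨ (∃ z' n', Hd z' n' M')) := by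
  induction h with
  | var =>
    intro M hz hR
    cases hR with
    | var h => exact ⟨_, Steps.rfl' _, Or.inr ⟨_, _, Hd.var⟩⟩
    | xs h1 h2 => cases h1; exact ⟨_, Steps.rfl' _, Or.inl ⟨_, rfl, h2, rfl⟩⟩
    | dead h => exact absurd (HN.head (Hd.var) hz) h
  | @app n a b h ih =>
    intro M hz hR
    cases hR with
    | app h1 h2 =>
      obtain ⟨M', h3, h4⟩ := ih (fun h => by have := hz h; omega) h1
      rcases h4 with ⟨m, h5, h6, rfl⟩ | ⟨z', n', h5⟩
      · have := hz h5
        obtain ⟨m, rfl⟩ : ∃ m', m = m' + 1 := ⟨m - 1, by omega⟩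
        refine ⟨_, (h3.appL _).trans (Steps.one (Step.beta _ _)),
          Or.inl ⟨m, h5, by omega, T_subst _ _ _ _ (Nat.zero_le _)⟩⟩
      · exact ⟨_, h3.appL _, Or.inr ⟨_, _, Hd.app _ h5⟩⟩
    | xs h1 h2 =>
      obtain ⟨h3, h4⟩ := h1.unique (Hd.app b h)
      exact ⟨_, Steps.rfl' _, Or.inl ⟨_, h3.symm, by omega, rfl⟩⟩
    | dead h' => exact absurd (HN.head (Hd.app b h) hz) h'

theorem R.solvable {l ν d : ℕ} {G : Lam} (h : HN (· ≤ l) d G) : ∀ {M}, R l ν d G M →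
    Solvable M := by
  induction h with
  | head h1 h2 =>
    intro M hR
    obtain ⟨M', h3, h4⟩ := R.head h1 h2 hR
    refine Solvable.of_steps h3 ?_
    rcases h4 with ⟨m, _, _, rfl⟩ | ⟨z', n', h5⟩
    · exact (T_hnf _ _).solvable
    · exact (IsHNF.head h5.headVarApp).solvable
  | abs h ih =>
    intro M hR
    cases hR with
    | abs h1 => obtain ⟨v, h2, h3⟩ := ih h1; exact ⟨_, h2.abs, IsHNF.abs h3⟩
    | xs h1 _ => cases h1
    | dead h1 => exact absurd (HN.abs h) h1
  | step h _ ih =>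
    intro M hR
    obtain ⟨M', h1, h2⟩ := hR.forward h.step
    exact Solvable.of_steps h1 (ih h2)

/-- Backward simulation of β-steps. -/
theorem R.backward {l ν d : ℕ} {G M : Lam} (h : R l ν d G M) :
    ∀ {M'}, Step M M' → ∃ G', Steps G G' ∧ R l ν d G' M' := by
  induction h with
  | var h => intro G' hs; cases hs
  | @app d a b a' b' h1 h2 ih1 ih2 =>
    intro M' hs
    cases hs with
    | appL _ hs => obtain ⟨m, h3, h4⟩ := ih1 hs; exact ⟨_, h3.appL _, R.app h4 h2⟩
    | appR _ hs => obtain ⟨m, h3, h4⟩ := ih2 hs; exact ⟨_, h3.appR _, R.app h1 h4⟩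
    | beta m _ =>
      clear ih1 ih2
      generalize hq : Lam.abs m = q at h1
      cases h1 with
      | var => cases hq
      | app => cases hq
      | abs h1 =>
        cases hq
        exact ⟨_, Steps.one (Step.beta _ _), h1.subst rfl (Nat.zero_le _) h2⟩
      | @xs _ n k _ h1 h3 =>
        refine ⟨_, Steps.rfl' _, ?_⟩
        cases k with
        | zero =>
          refine R.dead (fun h => ?_)
          have : n + 1 ≤ l := h.head_inv (Hd.app b h1)
          omega
        | succ k =>
          simp only [T, Lam.abs.injEq] at hq
          subst hq
          rw [T_subst _ _ _ _ (Nat.zero_le _)]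
          exact R.xs (Hd.app b h1) (by omega)
      | dead h1 => exact ⟨_, Steps.rfl' _, R.dead (fun h => h1 h.of_app_le)⟩
  | abs _ ih =>
    intro G' hs
    cases hs with
    | abs hs => obtain ⟨m, h3, h4⟩ := ih hs; exact ⟨_, h3.abs, R.abs h4⟩
  | xs h1 h2 => intro G' hs; exact absurd hs (T_normal _ _ _)
  | dead h => intro G' hs; exact ⟨_, Steps.rfl' _, R.dead h⟩

/-- Backward simulation of Ω-steps. -/
theorem R.backward_omega {l ν d : ℕ} {G M : Lam} (h : R l ν d G M) :
    ∀ {M'}, OmegaStep M M' → R l ν d G M' := by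
  have key : ∀ {d G M M'}, R l ν d G M → ¬ Solvable M → R l ν d G M' :=
    fun h hs => R.dead (fun h' => hs (R.solvable h' h))
  induction h with
  | var h => intro M' hs; exact absurd hs (not_omegaStep_var _ _)
  | app h1 h2 ih1 ih2 =>
    intro M' hs
    cases hs with
    | unsolv hs => exact key (R.app h1 h2) hs
    | appL _ hs => exact R.app (ih1 hs) h2
    | appR _ hs => exact R.app h1 (ih2 hs)
  | abs h ih =>
    intro M' hs
    cases hs with
    | unsolv hs => exact key (R.abs h) hs
    | abs hs => exact R.abs (ih hs)
  | xs h1 h2 => intro M' hs; exact absurd hs (T_not_omegaStep _ _ _)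
  | dead h => intro M' hs; exact R.dead h

theorem R.backward_bo {l ν d : ℕ} {G M M' : Lam} (h : R l ν d G M) (hs : BOSteps M M') :
    ∃ G', Steps G G' ∧ R l ν d G' M' := by
  induction hs with
  | refl => exact ⟨_, Steps.rfl' _, h⟩
  | tail _ hs ih =>
    obtain ⟨G', h1, h2⟩ := ih
    rcases hs with hs | hs
    · obtain ⟨G'', h3, h4⟩ := h2.backward hs
      exact ⟨_, h1.trans h3, h4⟩
    · exact ⟨_, h1, h2.backward_omega hs⟩

/-! ### Terms in which every occurrence of `x` is killed -/

/-- Every occurrence of `x` (index `d`) lies in an unsolvable subterm, or in a subterm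
`(x V)` where `V` has more than `l` elements. -/
inductive K (l : ℕ) : ℕ → Lam → Prop
  | var {d y : ℕ} : y < d → K l d (var y)
  | app {d : ℕ} {a b : Lam} : K l d a → K l d b → K l d (app a b)
  | abs {d : ℕ} {a : Lam} : K l (d + 1) a → K l d (abs a)
  | unsolv {d : ℕ} {a : Lam} : ¬ Solvable a → K l d a
  | long {d n : ℕ} {a : Lam} : Hd d n a → l < n → K l d a

theorem K.lift {l d : ℕ} {G : Lam} (h : K l d G) :
    ∀ j, j ≤ d → K l (d + 1) (lift j G) := by
  induction h with
  | var h =>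
    intro j hj
    simp only [Lam.lift]
    split_ifs
    · exact K.var (by omega)
    · exact K.var (by omega)
  | app _ _ ih1 ih2 => intro j hj; exact K.app (ih1 j hj) (ih2 j hj)
  | abs _ ih => intro j hj; exact K.abs (ih (j + 1) (by omega))
  | unsolv h => intro j hj; exact K.unsolv (fun h' => h h'.of_lift)
  | long h1 h2 => intro j hj; exact K.long (h1.lift j hj) h2

theorem K.subst {l e : ℕ} {a : Lam} (h : K l e a) :
    ∀ {d b k}, e = d + 1 → k ≤ d → K l d b → K l d (subst a k b) := by
  induction h with
  | var h =>
    intro d b k he hk hb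
    simp only [Lam.subst]
    split_ifs
    · exact hb
    · exact K.var (by omega)
    · exact K.var (by omega)
  | app _ _ ih1 ih2 => intro d b k he hk hb; exact K.app (ih1 he hk hb) (ih2 he hk hb)
  | abs _ ih =>
    intro d b k he hk hb
    exact K.abs (ih (by omega) (by omega) (hb.lift 0 (by omega)))
  | unsolv h => intro d b k he hk hb; exact K.unsolv (fun h' => h h'.of_subst)
  | long h1 h2 =>
    intro d b k he hk hb
    subst he
    exact K.long (h1.subst k b (by omega)) h2

theorem Solvable.abs {a : Lam} (h : Solvable a) : Solvable (Lam.abs a) := by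
  obtain ⟨v, h2, h3⟩ := h
  exact ⟨_, h2.abs, IsHNF.abs h3⟩

theorem K.step {l d : ℕ} {G : Lam} (h : K l d G) : ∀ {G'}, Step G G' → K l d G' := by
  induction h with
  | var h => intro G' hs; cases hs
  | app h1 h2 ih1 ih2 =>
    intro G' hs
    cases hs with
    | appL _ hs => exact K.app (ih1 hs) h2
    | appR _ hs => exact K.app h1 (ih2 hs)
    | beta a b =>
      cases h1 with
      | abs h1 => exact h1.subst rfl (Nat.zero_le _) h2
      | unsolv h1 => exact K.unsolv (fun h => h1 h.of_subst.abs)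
      | long h1 _ => cases h1
  | abs _ ih =>
    intro G' hs
    cases hs with
    | abs hs => exact K.abs (ih hs)
  | unsolv h => intro G' hs; exact K.unsolv (fun h' => h (Solvable.of_steps (Steps.one hs) h'))
  | long h1 h2 => intro G' hs; exact K.long (h1.step hs) h2

theorem K.steps {l d : ℕ} {G G' : Lam} (h : K l d G) (hs : Steps G G') : K l d G' := by
  induction hs with
  | refl => exact h
  | tail _ hs ih => exact ih.step hs

theorem K.of_dead {l d : ℕ} {G : Lam} (h : ¬ HN (· ≤ l) d G) : ∃ G', Steps G G' ∧ K l d G' := by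
  by_cases hG : Solvable G
  · rw [solvable_iff d] at hG
    induction hG with
    | @head d z n t h1 h2 =>
      have h3 : ¬ (z = d → n ≤ l) := fun h3 => h (HN.head h1 h3)
      push Not at h3
      obtain ⟨rfl, h3⟩ := h3
      exact ⟨_, Steps.rfl' _, K.long h1 h3⟩
    | abs _ ih =>
      obtain ⟨G', h1, h2⟩ := ih (fun h' => h (HN.abs h'))
      exact ⟨_, h1.abs, K.abs h2⟩
    | step hs _ ih =>
      obtain ⟨G', h1, h2⟩ := ih (fun h' => h (HN.step hs h'))
      exact ⟨_, (Steps.one hs.step).trans h1, h2⟩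
  · exact ⟨_, Steps.rfl' _, K.unsolv hG⟩

theorem R.killed {l ν d : ℕ} {G M : Lam} (h : R l ν d G M) :
    ¬ Free (ν + d) M → ∃ G', Steps G G' ∧ K l d G' := by
  induction h with
  | var h => intro _; exact ⟨_, Steps.rfl' _, K.var h⟩
  | app _ _ ih1 ih2 =>
    intro hf
    obtain ⟨a, h1, h2⟩ := ih1 (fun h => hf (Or.inl h))
    obtain ⟨b, h3, h4⟩ := ih2 (fun h => hf (Or.inr h))
    exact ⟨_, h1.app h3, K.app h2 h4⟩
  | abs _ ih =>
    intro hf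
    obtain ⟨a, h1, h2⟩ := ih hf
    exact ⟨_, h1.abs, K.abs h2⟩
  | xs h1 h2 => intro hf; exact absurd (T_free _ _) hf
  | dead h => intro _; exact K.of_dead h

/-! ### Contradiction with a good occurrence -/

theorem K.find {l d : ℕ} {G : Lam} (h : K l d G) : ∀ p : Pos, OccOf d G p →
    (∀ q u, q <+: p → subtermAt G q = some u → Solvable u) →
    ∃ q s n, q <+: p ∧ subtermAt G q = some s ∧ Hd (d + q.count Dir.down) n s ∧ l < n := by
  induction h with
  | @var d y h =>
    intro p ho _
    cases p with
    | nil => simp [OccOf, subtermAt] at ho; omega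
    | cons c p => simp [OccOf, subtermAt] at ho
  | @app d a b _ _ ih1 ih2 =>
    intro p ho hs
    cases p with
    | nil => simp [OccOf, subtermAt] at ho
    | cons c p =>
      cases c with
      | left =>
        obtain ⟨q, s, n, h1, h2, h3, h4⟩ := ih1 p (by simpa [OccOf, subtermAt] using ho)
          (fun q u hq hu => hs (Dir.left :: q) u (by simpa using hq) hu)
        exact ⟨Dir.left :: q, s, n, by simpa using h1, h2, by simpa using h3, h4⟩
      | right =>
        obtain ⟨q, s, n, h1, h2, h3, h4⟩ := ih2 p (by simpa [OccOf, subtermAt] using ho)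
          (fun q u hq hu => hs (Dir.right :: q) u (by simpa using hq) hu)
        exact ⟨Dir.right :: q, s, n, by simpa using h1, h2, by simpa using h3, h4⟩
      | down => simp [OccOf, subtermAt] at ho
  | @abs d a _ ih =>
    intro p ho hs
    cases p with
    | nil => simp [OccOf, subtermAt] at ho
    | cons c p =>
      cases c with
      | down =>
        obtain ⟨q, s, n, h1, h2, h3, h4⟩ := ih p
          (by simpa [OccOf, subtermAt, add_assoc, add_comm, add_left_comm] using ho)
          (fun q u hq hu => hs (Dir.down :: q) u (by simpa using hq) hu)
        refine ⟨Dir.down :: q, s, n, by simpa using h1, h2, ?_, h4⟩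
        simpa [add_assoc, add_comm, add_left_comm] using h3
      | left => simp [OccOf, subtermAt] at ho
      | right => simp [OccOf, subtermAt] at ho
  | unsolv h => intro p _ hs; exact absurd (hs [] _ (List.nil_prefix) (by simp [subtermAt])) h
  | @long d n a h1 h2 =>
    intro p _ _
    exact ⟨[], a, n, List.nil_prefix, by simp [subtermAt], by simpa using h1, h2⟩

theorem subtermAt_append (t : Lam) : ∀ (q r : Pos) (s : Lam), subtermAt t q = some s →
    subtermAt t (q ++ r) = subtermAt s r := by
  intro q
  induction q generalizing t with
  | nil => intro r s h; simp [subtermAt] at h; simp [h]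
  | cons c q ih =>
    intro r s h
    cases t <;> cases c <;> simp [subtermAt] at h <;> exact ih _ r s h

theorem Hd.pos {z n : ℕ} {s : Lam} (h : Hd z n s) :
    subtermAt s (List.replicate n Dir.left) = some (Lam.var z) := by
  induction h with
  | var => rfl
  | app b _ ih => simpa [List.replicate_succ, subtermAt] using ih

/-- A position of a variable in `(z V)` is either the head or inside an argument. -/
theorem Hd.path {z n : ℕ} {s : Lam} (h : Hd z n s) : ∀ (p : Pos) (y : ℕ),
    subtermAt s p = some (Lam.var y) → p = List.replicate n Dir.left ∨
      ∃ j r, j < n ∧ p = List.replicate j Dir.left ++ Dir.right :: r := by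
  induction h with
  | var =>
    intro p y hp
    cases p with
    | nil => exact Or.inl rfl
    | cons c p => simp [subtermAt] at hp
  | @app n a b _ ih =>
    intro p y hp
    cases p with
    | nil => simp [subtermAt] at hp
    | cons c p =>
      cases c with
      | left =>
        rcases ih p y hp with rfl | ⟨j, r, hj, rfl⟩
        · exact Or.inl rfl
        · exact Or.inr ⟨j + 1, r, by omega, rfl⟩
      | right => exact Or.inr ⟨0, p, by omega, rfl⟩
      | down => simp [subtermAt] at hp

theorem split_left (q : Pos) : ∃ (r : Pos) (m : ℕ), q = r ++ List.replicate m Dir.left ∧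
    ∀ r' : Pos, r ≠ r' ++ [Dir.left] := by
  induction q using List.reverseRecOn with
  | nil => exact ⟨[], 0, rfl, by simp⟩
  | append_singleton q c ih =>
    by_cases hc : c = Dir.left
    · subst hc
      obtain ⟨r, m, rfl, h⟩ := ih
      refine ⟨r, m + 1, ?_, h⟩
      rw [List.replicate_succ', List.append_assoc]
    · refine ⟨q ++ [c], 0, by simp, fun r' h => hc ?_⟩
      have := List.append_inj' h rfl
      simpa using this.2

theorem split_unique {r r' : Pos} (hr : ∀ s : Pos, r ≠ s ++ [Dir.left]) : ∀ {m m' : ℕ},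
    r' ++ List.replicate m' Dir.left = r ++ List.replicate m Dir.left → m ≥ m' := by
  intro m m'
  induction m' generalizing m with
  | zero => intro _; omega
  | succ m' ih =>
    intro h
    cases m with
    | zero =>
      exfalso
      rw [List.replicate_succ', ← List.append_assoc] at h
      exact hr _ (by simpa only [List.replicate_zero, List.append_nil] using h.symm)
    | succ m =>
      rw [List.replicate_succ', List.replicate_succ', ← List.append_assoc,
        ← List.append_assoc] at h
      have := ih (List.append_inj' h rfl).1
      omega

theorem K.contradiction {l : ℕ} {A G : Lam} {p : Pos} {U : List Lam} (h : K l 0 G)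
    (hg : GoodOcc A G p) (hU : ArgOf G p U) (hl : U.length ≤ l) : False := by
  obtain ⟨⟨hocc, hpure⟩, hsol⟩ := hg
  obtain ⟨q, s, n, ⟨t, rfl⟩, hq, hHd, hn⟩ := h.find p hocc
    (fun q u hq hu => (hsol q u hq hu).of_subst)
  obtain ⟨r, m, rfl, hr⟩ := split_left q
  have hocc' := hocc
  rw [OccOf, subtermAt_append _ _ _ _ hq] at hocc'
  rcases hHd.path t _ hocc' with rfl | ⟨j, r', hj, rfl⟩
  · obtain ⟨q', _, h1, h2, _, _⟩ := hU
    rw [List.append_assoc, List.replicate_append_replicate] at h1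
    have := split_unique h2 h1
    omega
  · refine hpure (r ++ List.replicate m Dir.left ++ List.replicate n Dir.left) ?_ ⟨?_, r, m + n,
      ?_, hr, m + j, r', by omega, ?_⟩
    · intro h
      have := List.append_cancel_left h
      have h1 : Dir.right ∈ List.replicate n Dir.left := by rw [this]; simp
      simp at h1
    · rw [OccOf, subtermAt_append _ _ _ _ hq, hHd.pos]
      simp [List.count_replicate]
    · rw [List.append_assoc, List.replicate_append_replicate]
    · rw [← List.replicate_append_replicate]; simp only [List.append_assoc]

end Lam

open Lam in
/-- case 1, simple argument: let `F` be non-normalizable with unique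
free variable `x` (index `0`), `x ∈ βΩ(F)`, and `A` closed with `F[x:=A] ≄ F[x:=Ω]`.
Let `(F_k)` be a cofinal reduction sequence for `F`, `(p k)` a good branch of the
associated tree, and `U_k = Arg(x_(k), F_k)`.  If `l` bounds the lengths of all the
`U_k`, then for `A' = λx₁…λx_l λz.(z ν)` (with `ν` a fresh variable, of de Bruijn index
`ν + l + 1` under the `l + 1` binders of `A'`), the variable `ν` occurs in every `t₁`
such that `F[x:=A'] ▷_{βΩ}* t₁`, i.e. `ν ∈ βΩ(F[x:=A'])`. -/
theorem case1_nu_not_erased (F A : Lam) (Fs : ℕ → Lam) (p : ℕ → Pos)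
    (U : ℕ → List Lam) (l : ℕ) (ν : ℕ)
    (hFnonnorm : ¬ ∃ N, Steps F N ∧ Normal N)
    (hFfree : Free 0 F) (hFonly : ∀ y, Free y F → y = 0)
    (hxbo : ∀ t', BOSteps F t' → Free 0 t')
    (hA : Closed A)
    (hne : ¬ SimH (subst F 0 A) (subst F 0 Omega))
    (h0 : Fs 0 = F)
    (hstep : ∀ k, Steps (Fs k) (Fs (k + 1)))
    (hcof : ∀ G, Steps F G → ∃ k, Steps G (Fs k))
    (hgood : ∀ k, GoodOcc A (Fs k) (p k))
    (hbranch : ∀ k, Residue 0 (Fs k) (Fs (k + 1)) (p k) (p (k + 1)))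
    (hU : ∀ k, ArgOf (Fs k) (p k) (U k))
    (hbound : ∀ k, (U k).length ≤ l) :
    ∀ t₁, BOSteps
        (subst F 0 (absN l (Lam.abs (Lam.app (Lam.var 0) (Lam.var (ν + l + 1)))))) t₁ →
      Free ν t₁ := by
  intro t₁ ht
  by_contra hf
  rw [show absN l (Lam.abs (Lam.app (Lam.var 0) (Lam.var (ν + l + 1)))) = T l (ν + 0) from
    (T_eq l ν).symm] at ht
  obtain ⟨G, hG, hR⟩ := (R.start l ν F 0 (fun y hy => (hFonly y hy).le)).backward_bo ht
  obtain ⟨G', hG', hK⟩ := hR.killed hf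
  obtain ⟨k, hk⟩ := hcof G' (hG.trans hG')
  exact (hK.steps hk).contradiction (hgood k) (hU k) (hbound k)
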